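/- arXiv:2408.13794 — 7 statements merged into one kernel-verified Lean document; each statement's English description precedes it below -/
import Mathlib

section
/- Let d be a positive real number and define, for the Liénard equation y'' + f(y)y' + g(y) = 0 with f(y) = (2+d)y and g(y) = y + d·y³, the Sabatini function τ(y) = (∫₀^y s·f(s) ds)² − y³·(g(y) − g'(0)·y). Then τ(y) = y⁶·((2+d)²/9 − d) for all y, and τ(y) = 0 for all y if and only if d = 1 or d = 4. -/
/-- For the Liénard equation `y'' + f(y)y' + g(y) = 0` with
`f(y) = (2+d)y` and `g(y) = y + d·y³` (`d > 0`), the Sabatini function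
`τ(y) = (∫₀^y s·f(s) ds)² − y³·(g(y) − g'(0)·y)` satisfies
`τ(y) = y⁶·((2+d)²/9 − d)` for all `y`, and `τ ≡ 0` iff `d = 1` or `d = 4`. -/
theorem sabatini_function_euler_poisson
    (d : ℝ) (hd : 0 < d)
    (f g τ : ℝ → ℝ)
    (hf : ∀ y, f y = (2 + d) * y)
    (hg : ∀ y, g y = y + d * y ^ 3)
    (hτ : ∀ y, τ y = (∫ s in (0:ℝ)..y, s * f s) ^ 2 - y ^ 3 * (g y - deriv g 0 * y)) :
    (∀ y, τ y = y ^ 6 * ((2 + d) ^ 2 / 9 - d)) ∧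
    ((∀ y, τ y = 0) ↔ d = 1 ∨ d = 4) := by
  have hderiv : deriv g 0 = 1 := by
    have h : HasDerivAt (fun y : ℝ => y + d * y ^ 3) (1 + d * (3 * 0 ^ 2)) 0 := by
      simpa using (hasDerivAt_id' (0 : ℝ)).fun_add ((hasDerivAt_pow 3 (0 : ℝ)).const_mul d)
    rw [funext hg, h.deriv]
    ring
  have hint (y : ℝ) : ∫ s in (0:ℝ)..y, s * f s = (2 + d) * (y ^ 3 / 3) := by
    have h (s : ℝ) : s * f s = (2 + d) * s ^ 2 := by rw [hf]; ring
    simp only [h, intervalIntegral.integral_const_mul, integral_pow]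
    norm_num
  have hformula (y : ℝ) : τ y = y ^ 6 * ((2 + d) ^ 2 / 9 - d) := by
    rw [hτ, hint, hg, hderiv]
    ring
  refine ⟨hformula, fun h => ?_, ?_⟩
  · have h1 := h 1
    rw [hformula] at h1
    have hfactor : (d - 1) * (d - 4) = 0 := by linarith
    exact (mul_eq_zero.mp hfactor).imp sub_eq_zero.mp sub_eq_zero.mp
  · rintro (rfl | rfl) y <;> rw [hformula] <;> norm_num
end

section
/- Let (F,G) : I → ℝ² be a C¹ solution on an interval I of the system G' = F − 4FG, F' = −F² − G with G(t) < 1/4 for all t ∈ I. Then the function t ↦ (1 − 2G(t) + 2F(t)²) / (2·√(1 − 4G(t))) is constant on I; equivalently, F(t)² = (2G(t) − 1)/2 + C₄·√(1 − 4G(t)) for all t ∈ I, where C₄ = (1 − 2G(t₀) + 2F(t₀)²)/(2√(1 − 4G(t₀))) for any fixed t₀ ∈ I. -/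
/-- A real function with zero derivative at every point of an order-connected set is constant
on that set. -/
theorem Set.OrdConnected.eq_of_hasDerivAt_zero {I : Set ℝ} (hI : I.OrdConnected) {f : ℝ → ℝ}
    (hf : ∀ t ∈ I, HasDerivAt f 0 t) {x y : ℝ} (hx : x ∈ I) (hy : y ∈ I) : f x = f y := by
  have h := hI.convex.norm_image_sub_le_of_norm_hasDerivWithin_le (C := 0)
    (fun t ht => (hf t ht).hasDerivWithinAt) (fun _ _ => norm_zero.le) hy hx
  rw [zero_mul] at h
  exact sub_eq_zero.mp (norm_le_zero_iff.mp h)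

/-- The square root `√(1 − 4G)` satisfies `s' = −2Fs` when `G' = F − 4FG` and `G < 1/4`. -/
theorem hasDerivAt_sqrt_one_sub_four_mul {F G : ℝ → ℝ} {t : ℝ}
    (hG : HasDerivAt G (F t - 4 * F t * G t) t) (hG4 : G t < 1 / 4) :
    HasDerivAt (fun t => Real.sqrt (1 - 4 * G t)) (-2 * F t * Real.sqrt (1 - 4 * G t)) t := by
  have hpos : 0 < 1 - 4 * G t := by linarith
  have hs : Real.sqrt (1 - 4 * G t) ≠ 0 := (Real.sqrt_pos.mpr hpos).ne'
  refine (((hG.const_mul 4).const_sub 1).sqrt hpos.ne').congr_deriv ?_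
  rw [div_eq_iff (mul_ne_zero two_ne_zero hs)]
  linear_combination 4 * F t * Real.sq_sqrt hpos.le

/-- The numerator `1 − 2G + 2F²` satisfies `n' = −2Fn` along solutions. -/
theorem hasDerivAt_one_sub_two_mul_add_two_mul_sq {F G : ℝ → ℝ} {t : ℝ}
    (hG : HasDerivAt G (F t - 4 * F t * G t) t) (hF : HasDerivAt F (-(F t) ^ 2 - G t) t) :
    HasDerivAt (fun t => 1 - 2 * G t + 2 * (F t) ^ 2)
      (-2 * F t * (1 - 2 * G t + 2 * (F t) ^ 2)) t := by
  refine (((hG.const_mul 2).const_sub 1).add ((hF.pow 2).const_mul 2)).congr_deriv ?_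
  push_cast
  ring

/-- Along any C¹ solution of `G' = F − 4FG`, `F' = −F² − G` with `G < 1/4`
on an interval `I`, the quantity `(1 − 2G + 2F²)/(2√(1 − 4G))` is constant; equivalently,
`F² = (2G − 1)/2 + C₄·√(1 − 4G)` with `C₄` computed from the data at any fixed `t₀ ∈ I`. -/
theorem first_integral_d4
    (I : Set ℝ) (hI : I.OrdConnected)
    (F G : ℝ → ℝ)
    (hG : ∀ t ∈ I, HasDerivAt G (F t - 4 * F t * G t) t)
    (hF : ∀ t ∈ I, HasDerivAt F (-(F t) ^ 2 - G t) t)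
    (hG4 : ∀ t ∈ I, G t < 1 / 4) :
    (∀ t₁ ∈ I, ∀ t₂ ∈ I,
      (1 - 2 * G t₁ + 2 * (F t₁) ^ 2) / (2 * Real.sqrt (1 - 4 * G t₁)) =
      (1 - 2 * G t₂ + 2 * (F t₂) ^ 2) / (2 * Real.sqrt (1 - 4 * G t₂))) ∧
    (∀ t₀ ∈ I, ∀ t ∈ I,
      (F t) ^ 2 = (2 * G t - 1) / 2 +
        ((1 - 2 * G t₀ + 2 * (F t₀) ^ 2) / (2 * Real.sqrt (1 - 4 * G t₀))) *
          Real.sqrt (1 - 4 * G t)) := by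
  have hs : ∀ t ∈ I, Real.sqrt (1 - 4 * G t) ≠ 0 := fun t ht =>
    (Real.sqrt_pos.mpr (by linarith [hG4 t ht])).ne'
  have hconst : ∀ t₁ ∈ I, ∀ t₂ ∈ I,
      (1 - 2 * G t₁ + 2 * (F t₁) ^ 2) / (2 * Real.sqrt (1 - 4 * G t₁)) =
      (1 - 2 * G t₂ + 2 * (F t₂) ^ 2) / (2 * Real.sqrt (1 - 4 * G t₂)) := by
    intro t₁ h₁ t₂ h₂
    refine hI.eq_of_hasDerivAt_zero
      (f := fun t => (1 - 2 * G t + 2 * (F t) ^ 2) / (2 * Real.sqrt (1 - 4 * G t)))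
      (fun t ht => ?_) h₁ h₂
    refine ((hasDerivAt_one_sub_two_mul_add_two_mul_sq (hG t ht) (hF t ht)).div
      ((hasDerivAt_sqrt_one_sub_four_mul (hG t ht) (hG4 t ht)).const_mul 2)
      (mul_ne_zero two_ne_zero (hs t ht))).congr_deriv ?_
    rw [div_eq_zero_iff]
    left
    ring
  refine ⟨hconst, fun t₀ h₀ t ht => ?_⟩
  have hst := hs t ht
  rw [hconst t₀ h₀ t ht]
  generalize Real.sqrt (1 - 4 * G t) = s at hst ⊢
  field_simp
  ring
end

section
/- Let (F,G) : I → ℝ² be a C¹ solution of the system G' = F − 4FG, F' = −F² − G, and let r : I → ℝ be a C¹ solution of the characteristic equation r'(t) = F(t)·r(t). Then the function t ↦ (1 − 4G(t))·r(t)⁴ is constant on I. -/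
/-- Along any C¹ solution of `G' = F − 4FG`, `F' = −F² − G` together with a
C¹ solution of the characteristic equation `r' = F·r`, the quantity `(1 − 4G)·r⁴`
is constant on the interval. -/
theorem conserved_quantity_along_characteristic
    (I : Set ℝ) (hI : I.OrdConnected)
    (F G r : ℝ → ℝ)
    (hG : ∀ t ∈ I, HasDerivAt G (F t - 4 * F t * G t) t)
    (hF : ∀ t ∈ I, HasDerivAt F (-(F t) ^ 2 - G t) t)
    (hr : ∀ t ∈ I, HasDerivAt r (F t * r t) t) :
    ∀ t₁ ∈ I, ∀ t₂ ∈ I,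
      (1 - 4 * G t₁) * (r t₁) ^ 4 = (1 - 4 * G t₂) * (r t₂) ^ 4 := by
  intro t₁ h₁ t₂ h₂
  have hderiv : ∀ t ∈ I,
      HasDerivWithinAt (fun t => (1 - 4 * G t) * r t ^ 4) 0 I t := by
    intro t ht
    have h := (((hG t ht).const_mul 4).const_sub 1).mul ((hr t ht).pow 4)
    refine (h.congr_deriv ?_).hasDerivWithinAt
    simp only [Pi.pow_apply]
    push_cast
    ring
  have hbound := hI.convex.norm_image_sub_le_of_norm_hasDerivWithin_le (C := 0)
    hderiv (fun _ _ => by simp) h₂ h₁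
  rw [zero_mul] at hbound
  exact sub_eq_zero.mp (norm_le_zero_iff.mp hbound)
end

section
/- Let (F₀,G₀) ∈ ℝ² with G₀ < 1/4. Then the maximal solution (F,G) of the system G' = F − 4FG, F' = −F² − G with F(0) = F₀, G(0) = G₀ is defined on all of ℝ, satisfies G(t) < 1/4 for all t, is periodic with period 2π (i.e., F(t + 2π) = F(t) and G(t + 2π) = G(t) for all t), and satisfies ∫₀^{2π} F(τ) dτ = 0. -/
/-- For any data `(F₀, G₀)` with `G₀ < 1/4`, the maximal solution of
`G' = F − 4FG`, `F' = −F² − G` is global in time, keeps `G < 1/4`, is `2π`-periodic,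
and the mean of `F` over a period vanishes. -/
theorem global_periodic_solution_d4
    (F₀ G₀ : ℝ) (hG₀ : G₀ < 1 / 4) :
    ∃ F G : ℝ → ℝ,
      (∀ t, HasDerivAt G (F t - 4 * F t * G t) t) ∧
      (∀ t, HasDerivAt F (-(F t) ^ 2 - G t) t) ∧
      F 0 = F₀ ∧ G 0 = G₀ ∧
      (∀ t, G t < 1 / 4) ∧
      (∀ t, F (t + 2 * Real.pi) = F t) ∧
      (∀ t, G (t + 2 * Real.pi) = G t) ∧
      (∫ τ in (0:ℝ)..(2 * Real.pi), F τ) = 0 := by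
  -- The squared radius `q = r²`, normalised by `r 0 = 1`, solves `q'' + q = c`, and `F = q' / (2 q)`.
  set c : ℝ := 2 * F₀ ^ 2 + 1 - 2 * G₀ with hc
  set q : ℝ → ℝ := fun t => c + (1 - c) * Real.cos t + 2 * F₀ * Real.sin t with hq
  set p : ℝ → ℝ := fun t => -(1 - c) * Real.sin t + 2 * F₀ * Real.cos t with hp
  have hq_deriv (t : ℝ) : HasDerivAt q (p t) t := by
    refine ((((Real.hasDerivAt_cos t).const_mul (1 - c)).const_add c).add
      ((Real.hasDerivAt_sin t).const_mul (2 * F₀))).congr_deriv ?_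
    simp only [hp]
    ring
  have hp_deriv (t : ℝ) : HasDerivAt p (c - q t) t := by
    refine (((Real.hasDerivAt_sin t).const_mul (-(1 - c))).add
      ((Real.hasDerivAt_cos t).const_mul (2 * F₀))).congr_deriv ?_
    simp only [hq]
    ring
  have hconserved (t : ℝ) : 2 * c * q t - q t ^ 2 - p t ^ 2 = 1 - 4 * G₀ := by
    simp only [hq, hp]
    linear_combination (-(1 - c) ^ 2 - 4 * F₀ ^ 2) * Real.sin_sq_add_cos_sq t + 2 * hc
  have hc_pos : 0 < c := by nlinarith [sq_nonneg F₀]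
  have hq_pos (t : ℝ) : 0 < q t := by
    by_contra! h
    nlinarith [hconserved t, sq_nonneg (q t), sq_nonneg (p t), mul_nonneg hc_pos.le (neg_nonneg.2 h)]
  have hq_ne (t : ℝ) : q t ≠ 0 := (hq_pos t).ne'
  have hq_zero : q 0 = 1 := by simp [hq]
  have hp_zero : p 0 = 2 * F₀ := by simp [hp]
  have hq_periodic (t : ℝ) : q (t + 2 * Real.pi) = q t := by simp [hq]
  have hp_periodic (t : ℝ) : p (t + 2 * Real.pi) = p t := by simp [hp]
  refine ⟨fun t => p t / (2 * q t), fun t => (1 - (1 - 4 * G₀) / q t ^ 2) / 4,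
    fun t => ?_, fun t => ?_, ?_, ?_, fun t => ?_, fun t => ?_, fun t => ?_, ?_⟩
  · refine ((((hasDerivAt_const t (1 - 4 * G₀)).div ((hq_deriv t).pow 2)
      (pow_ne_zero 2 (hq_ne t))).const_sub 1).div_const 4).congr_deriv ?_
    have := hq_ne t
    simp only [Pi.pow_apply]
    field_simp
    ring
  · refine ((hp_deriv t).div ((hq_deriv t).const_mul 2)
      (mul_ne_zero two_ne_zero (hq_ne t))).congr_deriv ?_
    have := hq_ne t
    rw [← hconserved t]
    field_simp
    ring
  · simp [hq_zero, hp_zero]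
  · simp [hq_zero]
  · have : 0 < (1 - 4 * G₀) / q t ^ 2 := div_pos (by linarith) (pow_pos (hq_pos t) 2)
    linarith
  · simp only [hq_periodic, hp_periodic]
  · simp only [hq_periodic]
  · have hlog (t : ℝ) : HasDerivAt (fun s => Real.log (q s) / 2) (p t / (2 * q t)) t :=
      (((hq_deriv t).log (hq_ne t)).div_const 2).congr_deriv (by rw [div_div, mul_comm])
    have hcont : Continuous fun t => p t / (2 * q t) := by
      refine Continuous.div ?_ ?_ fun t => mul_ne_zero two_ne_zero (hq_ne t) <;> fun_prop
    rw [intervalIntegral.integral_eq_sub_of_hasDerivAt (fun t _ => hlog t)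
      (hcont.intervalIntegrable _ _)]
    have := hq_periodic 0
    rw [zero_add] at this
    rw [this, sub_self]
end

section
/- Let n, m be positive natural numbers and let W₀ be an m×n real matrix. On an interval J ⊆ ℝ with 0 ∈ J, let Q : J → Matrix(n,n,ℝ) and P : J → Matrix(m,n,ℝ) be C¹ and satisfy Q' = M₁₁·Q + M₁₂·P and P' = M₂₁·Q + M₂₂·P, with Q(0) = Iₙ and P(0) = W₀. Here M₁₁(t) is n×n, M₁₂(t) is n×m, M₂₁(t) is m×n and M₂₂(t) is m×m, all continuous in t. If Q(t) is invertible for every t ∈ J, then W(t) := P(t)·Q(t)⁻¹ is C¹ on J, W(0) = W₀, and W satisfies the matrix Riccati equation W' = M₂₁ + M₂₂·W − W·M₁₁ − W·M₁₂·W on J. -/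
/-- A matrix-valued function of a real variable with entrywise derivatives at a point where it is
invertible has an entrywise differentiable inverse, with derivative `-A⁻¹ A' A⁻¹`. -/
theorem hasDerivAt_matrix_inv_apply {ι : Type*} [Fintype ι] [DecidableEq ι]
    {A : ℝ → Matrix ι ι ℝ} {A' : Matrix ι ι ℝ} {t : ℝ}
    (hA : ∀ i j, HasDerivAt (fun s => A s i j) (A' i j) t) (hu : IsUnit (A t)) (i j : ι) :
    HasDerivAt (fun s => (A s)⁻¹ i j) ((-((A t)⁻¹ * A' * (A t)⁻¹)) i j) t := by
  let : NormedRing (Matrix ι ι ℝ) := Matrix.linftyOpNormedRing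
  let : NormedAlgebra ℝ (Matrix ι ι ℝ) := Matrix.linftyOpNormedAlgebra
  have hA_matrix : HasDerivAt A A' t :=
    hasDerivAt_pi.2 fun i => hasDerivAt_pi.2 fun j => hA i j
  obtain ⟨u, hu⟩ := hu
  have h_inverse := hasFDerivAt_ringInverse (𝕜 := ℝ) u
  rw [hu] at h_inverse
  have h := h_inverse.comp_hasDerivAt t hA_matrix
  have h_entry := hasDerivAt_pi.1 (hasDerivAt_pi.1 h i) j
  simpa [Function.comp_def, ← Matrix.nonsing_inv_eq_ringInverse, ← hu,
    Matrix.coe_units_inv] using h_entry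

/-- The entrywise product rule for matrix-valued functions. -/
theorem hasDerivAt_matrix_mul_apply {ι κ μ : Type*} [Fintype κ]
    {A : ℝ → Matrix ι κ ℝ} {B : ℝ → Matrix κ μ ℝ} {A' : Matrix ι κ ℝ} {B' : Matrix κ μ ℝ} {t : ℝ}
    (hA : ∀ i j, HasDerivAt (fun s => A s i j) (A' i j) t)
    (hB : ∀ i j, HasDerivAt (fun s => B s i j) (B' i j) t) (i : ι) (j : μ) :
    HasDerivAt (fun s => (A s * B s) i j) ((A' * B t + A t * B') i j) t := by
  simp only [Matrix.add_apply, Matrix.mul_apply, ← Finset.sum_add_distrib]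
  exact HasDerivAt.fun_sum fun k _ => (hA i k).mul (hB k j)

/-- Radon lemma: if the block-linear system `Q' = M₁₁Q + M₁₂P`,
`P' = M₂₁Q + M₂₂P` with `Q(0) = Iₙ`, `P(0) = W₀` has `Q(t)` invertible on `J`,
then `W := P·Q⁻¹` is C¹, satisfies `W(0) = W₀` and the matrix Riccati equation
`W' = M₂₁ + M₂₂W − WM₁₁ − WM₁₂W` on `J`. -/
theorem radon_lemma
    (n m : ℕ) (hn : 0 < n) (hm : 0 < m)
    (J : Set ℝ) (hJ : J.OrdConnected) (h0 : (0:ℝ) ∈ J)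
    (M₁₁ : ℝ → Matrix (Fin n) (Fin n) ℝ) (M₁₂ : ℝ → Matrix (Fin n) (Fin m) ℝ)
    (M₂₁ : ℝ → Matrix (Fin m) (Fin n) ℝ) (M₂₂ : ℝ → Matrix (Fin m) (Fin m) ℝ)
    (hM₁₁ : ∀ i j, ContinuousOn (fun t => M₁₁ t i j) J)
    (hM₁₂ : ∀ i j, ContinuousOn (fun t => M₁₂ t i j) J)
    (hM₂₁ : ∀ i j, ContinuousOn (fun t => M₂₁ t i j) J)
    (hM₂₂ : ∀ i j, ContinuousOn (fun t => M₂₂ t i j) J)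
    (W₀ : Matrix (Fin m) (Fin n) ℝ)
    (Q : ℝ → Matrix (Fin n) (Fin n) ℝ) (P : ℝ → Matrix (Fin m) (Fin n) ℝ)
    (hQ : ∀ t ∈ J, ∀ i j,
      HasDerivAt (fun s => Q s i j) ((M₁₁ t * Q t + M₁₂ t * P t) i j) t)
    (hP : ∀ t ∈ J, ∀ i j,
      HasDerivAt (fun s => P s i j) ((M₂₁ t * Q t + M₂₂ t * P t) i j) t)
    (hQ0 : Q 0 = 1) (hP0 : P 0 = W₀)
    (hinv : ∀ t ∈ J, IsUnit (Q t)) :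
    P 0 * (Q 0)⁻¹ = W₀ ∧
    (∀ i j, ContinuousOn (fun t => (P t * (Q t)⁻¹) i j) J) ∧
    (∀ t ∈ J, ∀ i j,
      HasDerivAt (fun s => (P s * (Q s)⁻¹) i j)
        ((M₂₁ t + M₂₂ t * (P t * (Q t)⁻¹) - (P t * (Q t)⁻¹) * M₁₁ t
          - (P t * (Q t)⁻¹) * M₁₂ t * (P t * (Q t)⁻¹)) i j) t) := by
  have h_riccati : ∀ t ∈ J, ∀ i j,
      HasDerivAt (fun s => (P s * (Q s)⁻¹) i j)
        ((M₂₁ t + M₂₂ t * (P t * (Q t)⁻¹) - (P t * (Q t)⁻¹) * M₁₁ t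
          - (P t * (Q t)⁻¹) * M₁₂ t * (P t * (Q t)⁻¹)) i j) t := by
    intro t ht i j
    have h_cancel : Q t * (Q t)⁻¹ = 1 :=
      Matrix.mul_nonsing_inv _ ((Matrix.isUnit_iff_isUnit_det _).1 (hinv t ht))
    convert hasDerivAt_matrix_mul_apply (hP t ht)
      (hasDerivAt_matrix_inv_apply (hQ t ht) (hinv t ht)) i j using 1
    refine congrFun (congrFun ?_ i) j
    simp only [Matrix.add_mul, Matrix.mul_add, Matrix.mul_neg, Matrix.mul_assoc, h_cancel,
      Matrix.mul_one, neg_add]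
    abel
  refine ⟨by simp [hQ0, hP0], fun i j t ht => ?_, h_riccati⟩
  exact (h_riccati t ht i j).continuousAt.continuousWithinAt
end

section
/- Let (F₀, G₀) ∈ ℝ² with G₀ < 1/4, let (F,G) be the (global, 2π-periodic) solution of G' = F − 4FG, F' = −F² − G with F(0) = F₀, G(0) = G₀, and let (u₀, v₀) ∈ ℝ². Let (q, p₁, p₂) be the solution on ℝ of the linear system q' = p₁, p₁' = −2F·p₁ − p₂, p₂' = (1 − 4G)·p₁ − 4F·p₂ with q(0) = 1, p₁(0) = u₀, p₂(0) = v₀. Then the maximal solution of the Riccati system u' = −u² − 2F·u − v, v' = −u·v + (1 − 4G)·u − 4F·v with u(0) = u₀, v(0) = v₀ is defined on all of [0, ∞) if and only if q(t) > 0 for every t ∈ [0, 2π]; and if q(t₀) ≤ 0 for some t₀ ∈ (0, 2π], then the maximal solution of the Riccati system exists only up to some finite time T* < 2π. -/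
open Set

/-- A function on `ℝ` with everywhere vanishing derivative takes equal values at any two points. -/
lemma eq_of_forall_hasDerivAt_zero {f : ℝ → ℝ} (hf : ∀ t, HasDerivAt f 0 t) (a b : ℝ) :
    f a = f b :=
  is_const_of_deriv_eq_zero (fun t => (hf t).differentiableAt) (fun t => (hf t).deriv) a b

/-- The component `q` of the Radon linearization is `2π`-periodic. -/
lemma radon_periodic {F G q p₁ p₂ : ℝ → ℝ}
    (hG : ∀ t, HasDerivAt G (F t - 4 * F t * G t) t)
    (hF : ∀ t, HasDerivAt F (-(F t) ^ 2 - G t) t)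
    (hGlt : ∀ t, G t < 1 / 4)
    (hper : ∀ t, F (t + 2 * Real.pi) = F t ∧ G (t + 2 * Real.pi) = G t)
    (hq : ∀ t, HasDerivAt q (p₁ t) t)
    (hp₁ : ∀ t, HasDerivAt p₁ (-2 * F t * p₁ t - p₂ t) t)
    (hp₂ : ∀ t, HasDerivAt p₂ ((1 - 4 * G t) * p₁ t - 4 * F t * p₂ t) t) :
    Function.Periodic q (2 * Real.pi) := by
  obtain ⟨s, hs_def⟩ : ∃ s : ℝ → ℝ, ∀ t, s t = √(1 - 4 * G t) := ⟨_, fun _ => rfl⟩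
  have hs_pos : ∀ t, 0 < s t := fun t => by
    rw [hs_def]; exact Real.sqrt_pos.2 (by linarith [hGlt t])
  have hs_ne : ∀ t, s t ≠ 0 := fun t => (hs_pos t).ne'
  have hs_sq : ∀ t, s t ^ 2 = 1 - 4 * G t := fun t => by
    rw [hs_def]; exact Real.sq_sqrt (by linarith [hGlt t])
  have hs : ∀ t, HasDerivAt s (-2 * F t * s t) t := fun t => by
    have h := (((hG t).const_mul 4).const_sub 1).sqrt (by linarith [hGlt t])
    rw [← hs_def t] at h
    rw [funext hs_def] at *
    refine h.congr_deriv ?_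
    have h1 := hs_ne t
    have h2 := hs_sq t
    field_simp
    linear_combination (4 * F t) * h2
  -- `h` and `F` rotate into each other with angular speed `s`.
  obtain ⟨h, h_def⟩ : ∃ h : ℝ → ℝ, ∀ t, h t = (F t ^ 2 + G t) / s t := ⟨_, fun _ => rfl⟩
  have h_mul : ∀ t, h t * s t = F t ^ 2 + G t := fun t => by
    rw [h_def, div_mul_cancel₀ _ (hs_ne t)]
  have hh : ∀ t, HasDerivAt h (F t * s t) t := fun t => by
    have h0 := (((hF t).pow 2).add (hG t)).div (hs t) (hs_ne t)
    refine (h0.congr_of_eventuallyEq (Filter.Eventually.of_forall h_def)).congr_deriv ?_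
    have h1 := hs_ne t
    have h2 := hs_sq t
    simp only [Pi.add_apply, Pi.pow_apply]
    field_simp
    push_cast
    linear_combination (-F t) * h2
  have hF' : ∀ t, HasDerivAt F (-(h t * s t)) t := fun t =>
    (hF t).congr_deriv (by rw [h_mul]; ring)
  obtain ⟨r, r_def⟩ : ∃ r : ℝ → ℝ, ∀ t, r t = p₂ t / s t ^ 2 := ⟨_, fun _ => rfl⟩
  have r_mul : ∀ t, r t * s t ^ 2 = p₂ t := fun t => by
    rw [r_def, div_mul_cancel₀ _ (pow_ne_zero 2 (hs_ne t))]
  have hr : ∀ t, HasDerivAt r (p₁ t) t := fun t => by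
    have h0 := (hp₂ t).div ((hs t).pow 2) (pow_ne_zero 2 (hs_ne t))
    refine (h0.congr_of_eventuallyEq (Filter.Eventually.of_forall r_def)).congr_deriv ?_
    have h1 := hs_ne t
    have h2 := hs_sq t
    simp only [Pi.pow_apply, ← h2]
    field_simp
    push_cast
    ring
  have hp₁' : ∀ t, HasDerivAt p₁ (-2 * F t * p₁ t - r t * s t ^ 2) t := fun t => by
    rw [r_mul]; exact hp₁ t
  have hqr : ∀ t, HasDerivAt (fun t => q t - r t) 0 t := fun t =>
    ((hq t).sub (hr t)).congr_deriv (sub_self _)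
  suffices hrper : ∀ t, r (t + 2 * Real.pi) = r t by
    intro t
    have := eq_of_forall_hasDerivAt_zero hqr (t + 2 * Real.pi) t
    linarith [hrper t]
  have hM : ∀ t, HasDerivAt (fun t => F t ^ 2 + h t ^ 2) 0 t := fun t =>
    (((hF' t).pow 2).add ((hh t).pow 2)).congr_deriv (by push_cast; ring)
  have hs_per : ∀ t, s (t + 2 * Real.pi) = s t := fun t => by rw [hs_def, hs_def, (hper t).2]
  have h_per : ∀ t, h (t + 2 * Real.pi) = h t := fun t => by
    rw [h_def, h_def, (hper t).1, (hper t).2, hs_per]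
  intro t
  have hMt : ∀ x, F x ^ 2 + h x ^ 2 = F t ^ 2 + h t ^ 2 := fun x =>
    eq_of_forall_hasDerivAt_zero hM x t
  by_cases hdeg : F t ^ 2 + h t ^ 2 = 0
  · have hF_zero : ∀ x, F x = 0 := fun x => by
      have := hMt x
      nlinarith [sq_nonneg (F x), sq_nonneg (h x)]
    have h_zero : ∀ x, h x = 0 := fun x => by
      have := hMt x
      nlinarith [sq_nonneg (F x), sq_nonneg (h x)]
    have hs_one : ∀ x, s x ^ 2 = 1 := fun x => by
      have := h_mul x
      rw [h_zero, hF_zero] at this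
      rw [hs_sq]; linarith
    have hA : ∀ x, HasDerivAt (fun x => p₁ x * Real.cos x + r x * Real.sin x) 0 x := fun x =>
      (((hp₁' x).mul (Real.hasDerivAt_cos x)).add
        ((hr x).mul (Real.hasDerivAt_sin x))).congr_deriv (by
          rw [hF_zero, hs_one]; ring)
    have hB : ∀ x, HasDerivAt (fun x => r x * Real.cos x - p₁ x * Real.sin x) 0 x := fun x =>
      (((hr x).mul (Real.hasDerivAt_cos x)).sub
        ((hp₁' x).mul (Real.hasDerivAt_sin x))).congr_deriv (by
          rw [hF_zero, hs_one]; ring)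
    have hAt := eq_of_forall_hasDerivAt_zero hA (t + 2 * Real.pi) t
    have hBt := eq_of_forall_hasDerivAt_zero hB (t + 2 * Real.pi) t
    simp only [Real.cos_add_two_pi, Real.sin_add_two_pi] at hAt hBt
    linear_combination Real.sin t * hAt + Real.cos t * hBt -
      (r (t + 2 * Real.pi) - r t) * Real.sin_sq_add_cos_sq t
  · -- Wronskians of `r` with the two periodic solutions `F` and `h`.
    have hA : ∀ x, HasDerivAt (fun x => r x * h x + p₁ x * F x / s x) 0 x := fun x =>
      (((hr x).mul (hh x)).add
        (((hp₁' x).mul (hF' x)).div (hs x) (hs_ne x))).congr_deriv (by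
          have := hs_ne x
          simp only [Pi.mul_apply]
          field_simp
          ring)
    have hB : ∀ x, HasDerivAt (fun x => r x * F x - p₁ x * h x / s x) 0 x := fun x =>
      (((hr x).mul (hF' x)).sub
        (((hp₁' x).mul (hh x)).div (hs x) (hs_ne x))).congr_deriv (by
          have := hs_ne x
          simp only [Pi.mul_apply]
          field_simp
          ring)
    have hAt := eq_of_forall_hasDerivAt_zero hA (t + 2 * Real.pi) t
    have hBt := eq_of_forall_hasDerivAt_zero hB (t + 2 * Real.pi) t
    simp only [h_per, hs_per, (hper t).1] at hAt hBt
    refine mul_right_cancel₀ hdeg ?_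
    linear_combination h t * hAt + F t * hBt

/-- If the Riccati system has a solution on `[0, T]`, then `q` is positive on `[0, T]`. -/
lemma radon_pos_of_riccati_solution {F G q p₁ p₂ u v : ℝ → ℝ} {T : ℝ} (hT : 0 ≤ T)
    (hFc : Continuous F) (hGc : Continuous G)
    (hq : ∀ t, HasDerivAt q (p₁ t) t)
    (hp₁ : ∀ t, HasDerivAt p₁ (-2 * F t * p₁ t - p₂ t) t)
    (hp₂ : ∀ t, HasDerivAt p₂ ((1 - 4 * G t) * p₁ t - 4 * F t * p₂ t) t)
    (hq0 : q 0 = 1) (hu0 : u 0 = p₁ 0) (hv0 : v 0 = p₂ 0)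
    (hu : ∀ t ∈ Icc 0 T,
      HasDerivWithinAt u (-(u t) ^ 2 - 2 * F t * u t - v t) (Icc 0 T) t)
    (hv : ∀ t ∈ Icc 0 T,
      HasDerivWithinAt v (-(u t) * v t + (1 - 4 * G t) * u t - 4 * F t * v t) (Icc 0 T) t) :
    0 < q T := by
  have huc : ContinuousOn u (Icc 0 T) := fun t ht => (hu t ht).continuousWithinAt
  have hvc : ContinuousOn v (Icc 0 T) := fun t ht => (hv t ht).continuousWithinAt
  have bdd : ∀ {f : ℝ → ℝ}, ContinuousOn f (Icc 0 T) → ∃ C, ∀ t ∈ Icc 0 T, |f t| ≤ C :=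
    fun hf => isCompact_Icc.exists_bound_of_continuousOn hf
  obtain ⟨Cu, hCu⟩ := bdd huc
  obtain ⟨Cv, hCv⟩ := bdd hvc
  obtain ⟨CF, hCF⟩ := bdd hFc.continuousOn
  obtain ⟨CG, hCG⟩ := bdd hGc.continuousOn
  -- The defect `(p₁ - q u, p₂ - q v)` solves a homogeneous linear system with zero data.
  have hd : ∀ t ∈ Icc 0 T, p₁ t = q t * u t := by
    obtain ⟨C, hC⟩ : ∃ C, C = 8 * CF + 2 * Cu + 4 * CG + Cv := ⟨_, rfl⟩
    obtain ⟨N, hN⟩ : ∃ N : ℝ → ℝ, N = fun t =>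
        ((p₁ t - q t * u t) ^ 2 + (p₂ t - q t * v t) ^ 2) * Real.exp (-C * t) := ⟨_, rfl⟩
    have hN' : ∀ t ∈ Icc 0 T, HasDerivWithinAt N
        ((2 * (p₁ t - q t * u t) *
            ((-2 * F t - u t) * (p₁ t - q t * u t) - (p₂ t - q t * v t)) +
          2 * (p₂ t - q t * v t) *
            ((1 - 4 * G t - v t) * (p₁ t - q t * u t) - 4 * F t * (p₂ t - q t * v t)) -
          C * ((p₁ t - q t * u t) ^ 2 + (p₂ t - q t * v t) ^ 2)) * Real.exp (-C * t))
        (Icc 0 T) t := by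
      intro t ht
      have hE : HasDerivAt (fun t => Real.exp (-C * t)) (Real.exp (-C * t) * (-C)) t := by
        simpa using ((hasDerivAt_id t).const_mul (-C)).exp
      have h1 := ((hp₁ t).hasDerivWithinAt (s := Icc 0 T)).sub
        ((hq t).hasDerivWithinAt.mul (hu t ht))
      have h2 := ((hp₂ t).hasDerivWithinAt (s := Icc 0 T)).sub
        ((hq t).hasDerivWithinAt.mul (hv t ht))
      have h3 := ((h1.pow 2).add (h2.pow 2)).mul hE.hasDerivWithinAt
      rw [hN]
      refine h3.congr_deriv ?_
      simp only [Pi.add_apply, Pi.pow_apply, Pi.sub_apply, Pi.mul_apply]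
      push_cast
      ring
    have hanti : AntitoneOn N (Icc 0 T) := by
      refine antitoneOn_of_hasDerivWithinAt_nonpos (convex_Icc 0 T)
        (fun t ht => (hN' t ht).continuousWithinAt)
        (fun t ht => (hN' t (interior_subset ht)).mono interior_subset) ?_
      intro t ht
      replace ht := interior_subset ht
      refine mul_nonpos_of_nonpos_of_nonneg ?_ (Real.exp_pos _).le
      generalize p₁ t - q t * u t = x
      generalize p₂ t - q t * v t = y
      have a1 := abs_le.1 (hCF t ht)
      have a2 := abs_le.1 (hCu t ht)
      have a3 := abs_le.1 (hCG t ht)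
      have a4 := abs_le.1 (hCv t ht)
      have b1 : (-4 * F t - 2 * u t) * x ^ 2 ≤ (4 * CF + 2 * Cu) * x ^ 2 :=
        mul_le_mul_of_nonneg_right (by linarith) (sq_nonneg x)
      have b2 : -8 * F t * y ^ 2 ≤ 8 * CF * y ^ 2 :=
        mul_le_mul_of_nonneg_right (by linarith) (sq_nonneg y)
      have b3 : 2 * x * y * (-4 * G t - v t) ≤ (4 * CG + Cv) * (x ^ 2 + y ^ 2) := by
        nlinarith [mul_nonneg (show 0 ≤ 4 * CG + Cv + (-4 * G t - v t) by linarith)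
            (sq_nonneg (x - y)),
          mul_nonneg (show 0 ≤ 4 * CG + Cv - (-4 * G t - v t) by linarith)
            (sq_nonneg (x + y))]
      have b4 : 0 ≤ 4 * CF * x ^ 2 := mul_nonneg (by linarith) (sq_nonneg x)
      have b5 : 0 ≤ 2 * Cu * y ^ 2 := mul_nonneg (by linarith) (sq_nonneg y)
      rw [hC]
      nlinarith
    intro t ht
    have hle := hanti (left_mem_Icc.2 hT) ht ht.1
    have hN0 : N 0 = 0 := by rw [hN]; simp [hq0, hu0, hv0]
    rw [hN0, hN] at hle
    have hle' := nonpos_of_mul_nonpos_left hle (Real.exp_pos _)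
    have : (p₁ t - q t * u t) ^ 2 = 0 :=
      le_antisymm (by nlinarith [sq_nonneg (p₂ t - q t * v t)]) (sq_nonneg _)
    exact sub_eq_zero.1 (pow_eq_zero_iff two_ne_zero |>.1 this)
  have hmono : MonotoneOn (fun t => q t ^ 2 * Real.exp (2 * Cu * t)) (Icc 0 T) := by
    have hder : ∀ t, HasDerivAt (fun t => q t ^ 2 * Real.exp (2 * Cu * t))
        ((2 * q t * p₁ t + 2 * Cu * q t ^ 2) * Real.exp (2 * Cu * t)) t := by
      intro t
      have hE : HasDerivAt (fun t => Real.exp (2 * Cu * t))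
          (Real.exp (2 * Cu * t) * (2 * Cu)) t := by
        simpa using ((hasDerivAt_id t).const_mul (2 * Cu)).exp
      refine (((hq t).pow 2).mul hE).congr_deriv ?_
      simp only [Pi.pow_apply]
      push_cast
      ring
    refine monotoneOn_of_hasDerivWithinAt_nonneg (convex_Icc 0 T)
      (fun t _ => (hder t).continuousAt.continuousWithinAt)
      (fun t _ => (hder t).hasDerivWithinAt) ?_
    intro t ht
    replace ht := interior_subset ht
    refine mul_nonneg ?_ (Real.exp_pos _).le
    rw [hd t ht]
    nlinarith [mul_nonneg (show 0 ≤ u t + Cu by linarith [(abs_le.1 (hCu t ht)).1])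
      (sq_nonneg (q t))]
  have hne : ∀ t ∈ Icc 0 T, q t ≠ 0 := by
    intro t ht h0
    have := hmono (left_mem_Icc.2 hT) ht ht.1
    norm_num [h0, hq0] at this
  by_contra! hneg
  have hqc : ContinuousOn q (Icc 0 T) := fun t _ => (hq t).continuousAt.continuousWithinAt
  obtain ⟨t, ht, h0⟩ := intermediate_value_Icc' hT hqc ⟨hneg, hq0 ▸ zero_le_one⟩
  exact hne t ht h0

/-- With `(F, G)` the global `2π`-periodic solution of the characteristic
system (data `G₀ < 1/4`) and `(q, p₁, p₂)` the solution of its Radon linearization with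
`q(0) = 1`, `p₁(0) = u₀`, `p₂(0) = v₀`: the Riccati system
`u' = −u² − 2Fu − v`, `v' = −uv + (1 − 4G)u − 4Fv` with data `(u₀, v₀)` has a global
solution on `[0, ∞)` iff `q > 0` on `[0, 2π]`; and if `q(t₀) ≤ 0` for some
`t₀ ∈ (0, 2π]`, then solutions exist only up to some time `T* < 2π`. -/
theorem riccati_blowup_criterion_via_q
    (F₀ G₀ u₀ v₀ : ℝ) (hG₀ : G₀ < 1 / 4)
    (F G : ℝ → ℝ)
    (hG : ∀ t, HasDerivAt G (F t - 4 * F t * G t) t)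
    (hF : ∀ t, HasDerivAt F (-(F t) ^ 2 - G t) t)
    (hF0 : F 0 = F₀) (hG0 : G 0 = G₀)
    (hGlt : ∀ t, G t < 1 / 4)
    (hper : ∀ t, F (t + 2 * Real.pi) = F t ∧ G (t + 2 * Real.pi) = G t)
    (q p₁ p₂ : ℝ → ℝ)
    (hq : ∀ t, HasDerivAt q (p₁ t) t)
    (hp₁ : ∀ t, HasDerivAt p₁ (-2 * F t * p₁ t - p₂ t) t)
    (hp₂ : ∀ t, HasDerivAt p₂ ((1 - 4 * G t) * p₁ t - 4 * F t * p₂ t) t)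
    (hq0 : q 0 = 1) (hp₁0 : p₁ 0 = u₀) (hp₂0 : p₂ 0 = v₀) :
    ((∃ u v : ℝ → ℝ, u 0 = u₀ ∧ v 0 = v₀ ∧
        ∀ t ∈ Set.Ici (0:ℝ),
          HasDerivWithinAt u (-(u t) ^ 2 - 2 * F t * u t - v t) (Set.Ici 0) t ∧
          HasDerivWithinAt v (-(u t) * v t + (1 - 4 * G t) * u t - 4 * F t * v t)
            (Set.Ici 0) t)
      ↔ ∀ t ∈ Set.Icc (0:ℝ) (2 * Real.pi), 0 < q t) ∧
    ((∃ t₀ ∈ Set.Ioc (0:ℝ) (2 * Real.pi), q t₀ ≤ 0) →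
      ∃ Tstar : ℝ, 0 < Tstar ∧ Tstar < 2 * Real.pi ∧
        ∀ T : ℝ, (∃ u v : ℝ → ℝ, u 0 = u₀ ∧ v 0 = v₀ ∧
            ∀ t ∈ Set.Ico (0:ℝ) T,
              HasDerivWithinAt u (-(u t) ^ 2 - 2 * F t * u t - v t) (Set.Ico 0 T) t ∧
              HasDerivWithinAt v (-(u t) * v t + (1 - 4 * G t) * u t - 4 * F t * v t)
                (Set.Ico 0 T) t) →
          T ≤ Tstar) := by
  have hFc : Continuous F := continuous_iff_continuousAt.2 fun t => (hF t).continuousAt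
  have hGc : Continuous G := continuous_iff_continuousAt.2 fun t => (hG t).continuousAt
  have hqper := radon_periodic hG hF hGlt hper hq hp₁ hp₂
  refine ⟨⟨?_, ?_⟩, ?_⟩
  · rintro ⟨u, v, hu0, hv0, huv⟩ t ht
    exact radon_pos_of_riccati_solution ht.1 hFc hGc hq hp₁ hp₂ hq0
      (hu0.trans hp₁0.symm) (hv0.trans hp₂0.symm)
      (fun x hx => (huv x hx.1).1.mono Set.Icc_subset_Ici_self)
      (fun x hx => (huv x hx.1).2.mono Set.Icc_subset_Ici_self)
  · intro hpos
    have hq_pos : ∀ t, 0 < q t := fun t => by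
      obtain ⟨y, hy, hty⟩ := hqper.exists_mem_Ico₀ Real.two_pi_pos t
      rw [hty]
      exact hpos y (Set.Ico_subset_Icc_self hy)
    refine ⟨fun t => p₁ t / q t, fun t => p₂ t / q t, by simp [hq0, hp₁0],
      by simp [hq0, hp₂0], fun t _ => ⟨?_, ?_⟩⟩
    · refine ((hp₁ t).div (hq t) (hq_pos t).ne').hasDerivWithinAt.congr_deriv ?_
      have := (hq_pos t).ne'
      field_simp
      ring
    · refine ((hp₂ t).div (hq t) (hq_pos t).ne').hasDerivWithinAt.congr_deriv ?_
      have := (hq_pos t).ne'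
      field_simp
      ring
  · rintro ⟨t₀, ht₀, hqt₀⟩
    have hq2π : q (2 * Real.pi) = 1 := by rw [← hq0, ← hqper 0, zero_add]
    refine ⟨t₀, ht₀.1, lt_of_le_of_ne ht₀.2 ?_, ?_⟩
    · rintro rfl
      linarith
    · rintro T ⟨u, v, hu0, hv0, huv⟩
      by_contra! hlt
      have hsub : Set.Icc 0 t₀ ⊆ Set.Ico 0 T := Set.Icc_subset_Ico_right hlt
      exact hqt₀.not_gt (radon_pos_of_riccati_solution ht₀.1.le hFc hGc hq hp₁ hp₂ hq0
        (hu0.trans hp₁0.symm) (hv0.trans hp₂0.symm)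
        (fun x hx => (huv x (hsub hx)).1.mono hsub)
        (fun x hx => (huv x (hsub hx)).2.mono hsub))
end

section
/- There exists ε > 0 such that for all (F₀, G₀, u₀, v₀) ∈ ℝ⁴ with |F₀| < ε, |G₀| < ε, |u₀| < ε, |v₀| < ε, the maximal solution (F, G, u, v) of the coupled system G' = F − 4FG, F' = −F² − G, u' = −u² − 2F·u − v, v' = −u·v + (1 − 4G)·u − 4F·v with initial data (F₀, G₀, u₀, v₀) at t = 0 is defined on all of [0, ∞) and is bounded. -/
/-- A continuous `2π`-periodic real function is bounded. -/
theorem exists_abs_le_of_periodic {f : ℝ → ℝ} (hf : Continuous f)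
    (hp : Function.Periodic f (2 * Real.pi)) : ∃ C : ℝ, ∀ t, |f t| ≤ C := by
  obtain ⟨C, hC⟩ :=
    (hp.isBounded_of_continuous (by positivity) hf).exists_norm_le
  exact ⟨C, fun t => hC _ ⟨t, rfl⟩⟩

/-- The trigonometric polynomial `y` solving `y'' = a - y` with `y 0 = a - b` and
`y' 0 = d`. -/
noncomputable def shiftedOscillator (a b d t : ℝ) : ℝ :=
  a - b * Real.cos t + d * Real.sin t

/-- The derivative of `shiftedOscillator a b d`. -/
noncomputable def shiftedOscillatorDeriv (b d t : ℝ) : ℝ :=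
  b * Real.sin t + d * Real.cos t

theorem hasDerivAt_shiftedOscillator (a b d t : ℝ) :
    HasDerivAt (shiftedOscillator a b d) (shiftedOscillatorDeriv b d t) t := by
  have h := (((Real.hasDerivAt_cos t).const_mul b).const_sub a).add
    ((Real.hasDerivAt_sin t).const_mul d)
  exact h.congr_deriv (by simp only [shiftedOscillatorDeriv]; ring)

theorem hasDerivAt_shiftedOscillatorDeriv (a b d t : ℝ) :
    HasDerivAt (shiftedOscillatorDeriv b d) (a - shiftedOscillator a b d t) t := by
  have h := ((Real.hasDerivAt_sin t).const_mul b).add ((Real.hasDerivAt_cos t).const_mul d)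
  exact h.congr_deriv (by simp only [shiftedOscillator]; ring)

theorem periodic_shiftedOscillator (a b d : ℝ) :
    Function.Periodic (shiftedOscillator a b d) (2 * Real.pi) := by
  intro t
  simp [shiftedOscillator]

theorem periodic_shiftedOscillatorDeriv (b d : ℝ) :
    Function.Periodic (shiftedOscillatorDeriv b d) (2 * Real.pi) := by
  intro t
  simp [shiftedOscillatorDeriv]

theorem sub_sub_le_shiftedOscillator (a b d t : ℝ) :
    a - |b| - |d| ≤ shiftedOscillator a b d t := by
  have hb : |b * Real.cos t| ≤ |b| := by
    rw [abs_mul]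
    exact mul_le_of_le_one_right (abs_nonneg b) (Real.abs_cos_le_one t)
  have hd : |d * Real.sin t| ≤ |d| := by
    rw [abs_mul]
    exact mul_le_of_le_one_right (abs_nonneg d) (Real.abs_sin_le_one t)
  have := abs_le.1 hb
  have := abs_le.1 hd
  simp only [shiftedOscillator]
  linarith

/-- Pointwise verification of the characteristic–Riccati system: `S` is the square of the
Lagrangian flow ratio, `σ` its first variation in the initial data. -/
theorem hasDerivAt_of_oscillators {S S' σ σ' : ℝ → ℝ} {a α c w t : ℝ}
    (hS : HasDerivAt S (S' t) t) (hS' : HasDerivAt S' (a - S t) t)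
    (hσ : HasDerivAt σ (σ' t) t) (hσ' : HasDerivAt σ' (α - σ t) t)
    (hc : c = 2 * S t * (a - S t) - S' t ^ 2 + S t ^ 2)
    (hw : w = -(σ t * (a - S t) + S t * (α - σ t) - S' t * σ' t + S t * σ t) / 2)
    (h0 : S t ≠ 0) (h1 : 2 * S t + σ t ≠ 0) :
    let F := fun s => S' s / (2 * S s)
    let G := fun s => (1 - c / S s ^ 2) / 4
    let u := fun s => (σ' s * S s - S' s * σ s) / (S s * (2 * S s + σ s))
    let v := fun s => (2 * w * S s + c * σ s) / (S s ^ 2 * (2 * S s + σ s))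
    HasDerivAt G (F t - 4 * F t * G t) t ∧
    HasDerivAt F (-(F t) ^ 2 - G t) t ∧
    HasDerivAt u (-(u t) ^ 2 - 2 * F t * u t - v t) t ∧
    HasDerivAt v (-(u t) * v t + (1 - 4 * G t) * u t - 4 * F t * v t) t := by
  intro F G u v
  have hD := (hS.const_mul 2).add hσ
  refine ⟨?_, ?_, ?_, ?_⟩
  · have h := (((hasDerivAt_const t c).div (hS.pow 2) (pow_ne_zero 2 h0)).const_sub 1).div_const 4
    refine h.congr_deriv ?_
    simp only [F, G, Pi.pow_apply]
    field_simp
    ring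
  · have h := hS'.div (hS.const_mul 2) (mul_ne_zero two_ne_zero h0)
    refine h.congr_deriv ?_
    simp only [F, G, hc]
    field_simp
    ring
  · have h := ((hσ'.mul hS).sub (hS'.mul hσ)).div (hS.mul hD) (mul_ne_zero h0 h1)
    refine h.congr_deriv ?_
    simp only [F, u, v, hc, hw, Pi.mul_apply, Pi.add_apply, Pi.sub_apply]
    field_simp
    ring
  · have h := ((hS.const_mul (2 * w)).add (hσ.const_mul c)).div ((hS.pow 2).mul hD)
      (mul_ne_zero (pow_ne_zero 2 h0) h1)
    refine h.congr_deriv ?_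
    simp only [F, G, u, v, Pi.mul_apply, Pi.add_apply, Pi.pow_apply]
    field_simp
    ring

/-- There is a neighborhood of the trivial equilibrium such that the coupled
characteristic–Riccati system `G' = F − 4FG`, `F' = −F² − G`, `u' = −u² − 2Fu − v`,
`v' = −uv + (1 − 4G)u − 4Fv` has, for all data in that neighborhood, a solution defined
and bounded on all of `[0, ∞)`. -/
theorem global_smoothness_near_trivial_equilibrium :
    ∃ ε : ℝ, 0 < ε ∧
      ∀ F₀ G₀ u₀ v₀ : ℝ, |F₀| < ε → |G₀| < ε → |u₀| < ε → |v₀| < ε →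
        ∃ F G u v : ℝ → ℝ,
          F 0 = F₀ ∧ G 0 = G₀ ∧ u 0 = u₀ ∧ v 0 = v₀ ∧
          (∀ t ∈ Set.Ici (0:ℝ),
            HasDerivWithinAt G (F t - 4 * F t * G t) (Set.Ici 0) t ∧
            HasDerivWithinAt F (-(F t) ^ 2 - G t) (Set.Ici 0) t ∧
            HasDerivWithinAt u (-(u t) ^ 2 - 2 * F t * u t - v t) (Set.Ici 0) t ∧
            HasDerivWithinAt v (-(u t) * v t + (1 - 4 * G t) * u t - 4 * F t * v t)
              (Set.Ici 0) t) ∧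
          ∃ C : ℝ, ∀ t ∈ Set.Ici (0:ℝ),
            |F t| ≤ C ∧ |G t| ≤ C ∧ |u t| ≤ C ∧ |v t| ≤ C := by
  refine ⟨1 / 100, by norm_num, fun F₀ G₀ u₀ v₀ hF hG hu hv => ?_⟩
  rw [abs_lt] at hF hG hu hv
  obtain ⟨b, hb⟩ : ∃ b, b = 2 * F₀ ^ 2 - 2 * G₀ := ⟨_, rfl⟩
  obtain ⟨β, hβ⟩ : ∃ β, β = 4 * F₀ * u₀ - 2 * v₀ := ⟨_, rfl⟩
  have hb_small : |b| ≤ 1 / 20 := by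
    rw [abs_le]; constructor <;> nlinarith
  have hβ_small : |β| ≤ 1 / 20 := by
    rw [abs_le]; constructor <;> nlinarith
  have hd_small : |2 * F₀| ≤ 1 / 20 := by
    rw [abs_le]; constructor <;> linarith
  have hδ_small : |2 * u₀| ≤ 1 / 20 := by
    rw [abs_le]; constructor <;> linarith
  have hb_lower := (abs_le.1 hb_small).1
  have hβ_lower := (abs_le.1 hβ_small).1
  let S := shiftedOscillator (1 + b) b (2 * F₀)
  let S' := shiftedOscillatorDeriv b (2 * F₀)
  let σ := shiftedOscillator β β (2 * u₀)
  let σ' := shiftedOscillatorDeriv β (2 * u₀)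
  have hS_lower (t : ℝ) : 1 / 2 ≤ S t := by
    have := sub_sub_le_shiftedOscillator (1 + b) b (2 * F₀) t
    simp only [S]
    linarith
  have hσ_lower (t : ℝ) : -(1 / 2) ≤ σ t := by
    have := sub_sub_le_shiftedOscillator β β (2 * u₀) t
    simp only [σ]
    linarith
  have hsol (t : ℝ) := hasDerivAt_of_oscillators (S := S) (S' := S') (σ := σ) (σ' := σ')
    (c := 1 - 4 * G₀) (w := v₀)
    (hasDerivAt_shiftedOscillator (1 + b) b (2 * F₀) t)
    (hasDerivAt_shiftedOscillatorDeriv (1 + b) b (2 * F₀) t)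
    (hasDerivAt_shiftedOscillator β β (2 * u₀) t)
    (hasDerivAt_shiftedOscillatorDeriv β β (2 * u₀) t)
    (by
      simp only [S, S', shiftedOscillator, shiftedOscillatorDeriv]
      linear_combination -2 * hb + (4 * F₀ ^ 2 + b ^ 2) * Real.sin_sq_add_cos_sq t)
    (by
      simp only [S, S', σ, σ', shiftedOscillator, shiftedOscillatorDeriv]
      linear_combination hβ / 2 - (b * β + 4 * F₀ * u₀) * Real.sin_sq_add_cos_sq t / 2)
    (by linarith [hS_lower t]) (by linarith [hS_lower t, hσ_lower t])
  have hS_per : Function.Periodic S (2 * Real.pi) := periodic_shiftedOscillator _ _ _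
  have hS'_per : Function.Periodic S' (2 * Real.pi) := periodic_shiftedOscillatorDeriv _ _
  have hσ_per : Function.Periodic σ (2 * Real.pi) := periodic_shiftedOscillator _ _ _
  have hσ'_per : Function.Periodic σ' (2 * Real.pi) := periodic_shiftedOscillatorDeriv _ _
  obtain ⟨CG, hCG⟩ := exists_abs_le_of_periodic
    (continuous_iff_continuousAt.2 fun t => (hsol t).1.continuousAt)
    (fun t => by simp only [hS_per t])
  obtain ⟨CF, hCF⟩ := exists_abs_le_of_periodic
    (continuous_iff_continuousAt.2 fun t => (hsol t).2.1.continuousAt)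
    (fun t => by simp only [hS_per t, hS'_per t])
  obtain ⟨Cu, hCu⟩ := exists_abs_le_of_periodic
    (continuous_iff_continuousAt.2 fun t => (hsol t).2.2.1.continuousAt)
    (fun t => by simp only [hS_per t, hS'_per t, hσ_per t, hσ'_per t])
  obtain ⟨Cv, hCv⟩ := exists_abs_le_of_periodic
    (continuous_iff_continuousAt.2 fun t => (hsol t).2.2.2.continuousAt)
    (fun t => by simp only [hS_per t, hσ_per t])
  refine ⟨_, _, _, _, ?_, ?_, ?_, ?_, fun t _ => ⟨(hsol t).1.hasDerivWithinAt,
    (hsol t).2.1.hasDerivWithinAt, (hsol t).2.2.1.hasDerivWithinAt,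
    (hsol t).2.2.2.hasDerivWithinAt⟩, max (max CF CG) (max Cu Cv), fun t _ =>
    ⟨(hCF t).trans (by simp), (hCG t).trans (by simp), (hCu t).trans (by simp),
      (hCv t).trans (by simp)⟩⟩
  all_goals simp [S, S', σ, σ', shiftedOscillator, shiftedOscillatorDeriv]
end
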